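/- Let N ∈ ℕ and C > 0, let a(y) = Σ_{m=0}^N a_m·e^{−2πi m y} be one fixed trigonometric polynomial of degree at most N with a(0) = 1 and sup_{y∈ℝ}|a(y)| ≤ C, and let φ : ℝ → ℂ be continuous, integrable and compactly supported with linearly independent integer shifts and with φ̂(z) = Π_{j=1}^∞ a(2^{−j} z) for all z ∈ ℂ (pointwise limit of partial products). Let λ ∈ ℂ, d ∈ ℕ₀ with d ≤ N, let ω_0, …, ω_d : ℝ → ℂ be 1-periodic analytic functions with ω_d not identically zero, and let p_0, …, p_d be polynomials with deg(p_k) = k. If the analytic function g(t) = e^{λt} Σ_{k=0}^d p_k(t)·ω_k(t) belongs to V_φ, then λ ∈ 2πi·ℤ and each function t ↦ e^{λt}·ω_k(t), k = 0, …, d, is constant; in particular g is an algebraic polynomial of degree d. -/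

import Mathlib

open MeasureTheory

/-- The Fourier transform of `φ`, analytically extended to `ℂ`:
`φ̂(z) = ∫_ℝ φ(x)·e^{−2πi x z} dx`. -/
noncomputable def fourierExt (φ : ℝ → ℂ) (z : ℂ) : ℂ :=
  ∫ x : ℝ, φ x * Complex.exp (-(2 * (Real.pi : ℂ) * Complex.I * (x : ℂ) * z))

/-!
The dilation `f ↦ f (·/2)` maps `V_φ` into itself because `φ` satisfies a two-scale equation, and
`V_φ` restricted to a compact interval is finite-dimensional. So every `f ∈ V_φ` satisfies a
nontrivial polynomial equation `Q(D) f = 0` in the dilation operator `D` near `0`. As `D` multiplies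
the `n`-th derivative at `0` by `2⁻ⁿ`, an analytic `f` then has `Q(2⁻ⁿ) f⁽ⁿ⁾(0) = 0` for all `n`, so
almost all of its Taylor coefficients vanish and `f` is a polynomial. Finally, a polynomial of the
form `∑ pₖ(t) cₖ(t)` with `cₖ(t + 1) = ρ cₖ(t)` agrees on each coset `t + ℕ` with `ρⁿ` times a
polynomial with coefficients frozen at `t`; comparing leading coefficients forces `ρ = 1` and all
`cₖ` constant.
-/

open Filter Polynomial Topology

section Polynomials

variable {R : Type*}

lemma degree_sum_C_mul [Semiring R] [NoZeroDivisors R] {ι : Type*} {s : Finset ι} {p : ι → R[X]}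
    (hp : Set.InjOn (degree ∘ p) s) (c : ι → R) :
    (∑ i ∈ s, C (c i) * p i).degree = s.sup fun i ↦ (C (c i) * p i).degree := by
  refine degree_sum_eq_of_disjoint _ s ?_
  rintro i ⟨hi, hi0⟩ j ⟨hj, hj0⟩ hij hdeg
  have hci : c i ≠ 0 := fun h ↦ hi0 (by simp [h])
  have hcj : c j ≠ 0 := fun h ↦ hj0 (by simp [h])
  simp only [Function.comp_apply, degree_C_mul hci, degree_C_mul hcj] at hdeg
  exact hij (hp hi hj hdeg)

lemma eq_zero_of_sum_C_mul_eq_zero [Semiring R] [NoZeroDivisors R] {ι : Type*} {s : Finset ι}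
    {p : ι → R[X]} (hp : Set.InjOn (degree ∘ p) s) (hp0 : ∀ i ∈ s, p i ≠ 0) {c : ι → R}
    (hc : ∑ i ∈ s, C (c i) * p i = 0) {i : ι} (hi : i ∈ s) : c i = 0 := by
  have hsup := degree_sum_C_mul hp c
  rw [hc, degree_zero, eq_comm, Finset.sup_eq_bot_iff] at hsup
  simpa [hp0 i hi] using hsup i hi

lemma degree_sum_range_C_mul [Semiring R] [NoZeroDivisors R] {d : ℕ} {p : ℕ → R[X]}
    (hp : ∀ k ≤ d, (p k).degree = k) {c : ℕ → R} (hc : c d ≠ 0) :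
    (∑ k ∈ Finset.range (d + 1), C (c k) * p k).degree = d := by
  have htop : (C (c d) * p d).degree = d := by rw [degree_C_mul hc, hp d le_rfl]
  rw [Finset.sum_range_succ, degree_add_eq_right_of_degree_lt, htop]
  rw [htop]
  refine (degree_sum_le _ _).trans_lt <|
    (Finset.sup_lt_iff (WithBot.bot_lt_coe d)).2 fun k hk ↦ ?_
  have hkd : k < d := Finset.mem_range.1 hk
  calc (C (c k) * p k).degree ≤ (p k).degree := smul_eq_C_mul (c k) ▸ degree_smul_le _ _
    _ = k := hp k hkd.le
    _ < d := Nat.cast_lt.2 hkd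

variable [CommRing R] [IsDomain R]

lemma eventually_eval_pow_ne_zero {Q : R[X]} (hQ : Q ≠ 0) {r : R}
    (hr : Function.Injective fun n : ℕ ↦ r ^ n) : ∀ᶠ n in atTop, Q.eval (r ^ n) ≠ 0 := by
  rw [← Nat.cofinite_eq_atTop]
  exact hr.tendsto_cofinite.eventually (finite_setOfPred_isRoot hQ).compl_mem_cofinite

variable [CharZero R]

lemma eq_of_eval_add_natCast_eq {P Q : R[X]} {x : R}
    (h : ∀ n : ℕ, P.eval (x + n) = Q.eval (x + n)) : P = Q := by
  refine eq_of_infinite_eval_eq P Q (Set.Infinite.mono (Set.range_subset_iff.2 h) ?_)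
  exact Set.infinite_range_of_injective ((add_right_injective x).comp Nat.cast_injective)

lemma eq_one_of_eval_add_natCast_eq_pow_mul {P Q : R[X]} {x ρ : R} (hP : P ≠ 0)
    (h : ∀ n : ℕ, P.eval (x + n) = ρ ^ n * Q.eval (x + n)) : ρ = 1 := by
  -- The factor `ρ ^ n` is eliminated by cross-multiplying the relations at `n` and `n + 1`.
  have hcross : P.comp (X + C 1) * Q = C ρ * (P * Q.comp (X + C 1)) := by
    refine eq_of_eval_add_natCast_eq (x := x) fun n ↦ ?_
    have hsucc := h (n + 1)
    push_cast at hsucc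
    simp only [eval_mul, eval_comp, eval_add, eval_X, eval_C, add_assoc, hsucc, h n]
    ring
  have hQ : Q ≠ 0 := by
    rintro rfl
    exact hP (eq_of_eval_add_natCast_eq (x := x) fun n ↦ by simpa using h n)
  have hlead := congrArg leadingCoeff hcross
  have hX : (X + C (1 : R)).natDegree ≠ 0 := by rw [natDegree_X_add_C]; exact one_ne_zero
  simp only [leadingCoeff_mul, leadingCoeff_C, leadingCoeff_comp hX, leadingCoeff_X_add_C, one_pow,
    mul_one] at hlead
  exact (mul_eq_right₀ (mul_ne_zero (leadingCoeff_ne_zero.2 hP) (leadingCoeff_ne_zero.2 hQ))).1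
    hlead.symm

end Polynomials

section QuasiPeriodic

variable {ι : Type*} {s : Finset ι} {p : ι → ℂ[X]} {c : ι → ℝ → ℂ} {ρ : ℂ} {P : ℂ[X]}

lemma apply_add_natCast_of_apply_add_one {f : ℝ → ℂ} (hf : ∀ t, f (t + 1) = ρ * f t) (t : ℝ)
    (n : ℕ) : f (t + n) = ρ ^ n * f t := by
  induction n with
  | zero => simp
  | succ n ih => rw [Nat.cast_succ, ← add_assoc, hf, ih, pow_succ', mul_assoc]

lemma eval_add_natCast_eq_pow_mul (hc : ∀ i ∈ s, ∀ t, c i (t + 1) = ρ * c i t)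
    (hP : ∀ t : ℝ, ∑ i ∈ s, (p i).eval ↑t * c i t = P.eval ↑t) (t : ℝ) (n : ℕ) :
    P.eval ((t : ℂ) + n) = ρ ^ n * (∑ i ∈ s, C (c i t) * p i).eval ((t : ℂ) + n) := by
  have h := hP (t + n)
  push_cast at h
  rw [← h, eval_finsetSum, Finset.mul_sum]
  refine Finset.sum_congr rfl fun i hi ↦ ?_
  rw [apply_add_natCast_of_apply_add_one (hc i hi), eval_mul, eval_C]
  ring

lemma multiplier_eq_one_of_quasiPeriodic_sum (hc : ∀ i ∈ s, ∀ t, c i (t + 1) = ρ * c i t)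
    (hP : ∀ t : ℝ, ∑ i ∈ s, (p i).eval ↑t * c i t = P.eval ↑t) (hP0 : P ≠ 0) : ρ = 1 :=
  eq_one_of_eval_add_natCast_eq_pow_mul hP0 (eval_add_natCast_eq_pow_mul hc hP 0)

lemma ne_zero_of_quasiPeriodic_sum (hρ : ρ ≠ 0)
    (hc : ∀ i ∈ s, ∀ t, c i (t + 1) = ρ * c i t)
    (hP : ∀ t : ℝ, ∑ i ∈ s, (p i).eval ↑t * c i t = P.eval ↑t) {t : ℝ}
    (ht : ∑ i ∈ s, C (c i t) * p i ≠ 0) : P ≠ 0 := by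
  rintro rfl
  refine ht (eq_of_eval_add_natCast_eq (x := (t : ℂ)) fun n ↦ ?_)
  simpa [hρ] using eval_add_natCast_eq_pow_mul hc hP t n

lemma eq_sum_C_mul_of_periodic (hc : ∀ i ∈ s, ∀ t, c i (t + 1) = c i t)
    (hP : ∀ t : ℝ, ∑ i ∈ s, (p i).eval ↑t * c i t = P.eval ↑t) (t : ℝ) :
    P = ∑ i ∈ s, C (c i t) * p i :=
  eq_of_eval_add_natCast_eq (x := (t : ℂ)) fun n ↦ by
    simpa using eval_add_natCast_eq_pow_mul (ρ := 1) (by simpa using hc) hP t n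

lemma apply_eq_apply_of_periodic_sum (hp : Set.InjOn (degree ∘ p) s) (hp0 : ∀ i ∈ s, p i ≠ 0)
    (hc : ∀ i ∈ s, ∀ t, c i (t + 1) = c i t)
    (hP : ∀ t : ℝ, ∑ i ∈ s, (p i).eval ↑t * c i t = P.eval ↑t) {i : ι} (hi : i ∈ s) (t u : ℝ) :
    c i t = c i u := by
  have hdiff : ∑ j ∈ s, C (c j t - c j u) * p j = 0 := by
    simp only [map_sub, sub_mul, Finset.sum_sub_distrib, ← eq_sum_C_mul_of_periodic hc hP, sub_self]
  exact sub_eq_zero.1 (eq_zero_of_sum_C_mul_eq_zero hp hp0 hdiff hi)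

theorem eq_one_and_const_and_degree_of_quasiPeriodic_sum {d : ℕ} {p : ℕ → ℂ[X]}
    (hdeg : ∀ k ≤ d, (p k).degree = k) {c : ℕ → ℝ → ℂ} (hρ : ρ ≠ 0)
    (hc : ∀ k ≤ d, ∀ t, c k (t + 1) = ρ * c k t) (hcd : ∃ t, c d t ≠ 0)
    (hP : ∀ t : ℝ, ∑ k ∈ Finset.range (d + 1), (p k).eval ↑t * c k t = P.eval ↑t) :
    ρ = 1 ∧ (∀ k ≤ d, ∀ t u, c k t = c k u) ∧ P.degree = d := by
  simp only [← Finset.mem_range_succ_iff] at hc ⊢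
  have hdeg' {k : ℕ} (hk : k ∈ Finset.range (d + 1)) : (p k).degree = k :=
    hdeg k (Finset.mem_range_succ_iff.1 hk)
  have hinj : Set.InjOn (degree ∘ p) (Finset.range (d + 1)) := fun i hi j hj hij ↦ by
    simpa [hdeg' hi, hdeg' hj] using hij
  obtain ⟨t₀, ht₀⟩ := hcd
  have hdeg₀ := degree_sum_range_C_mul hdeg (c := (c · t₀)) ht₀
  have hP0 : P ≠ 0 := ne_zero_of_quasiPeriodic_sum hρ hc hP (ne_zero_of_coe_le_degree hdeg₀.ge)
  obtain rfl : ρ = 1 := multiplier_eq_one_of_quasiPeriodic_sum hc hP hP0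
  simp only [one_mul] at hc
  refine ⟨rfl, fun k hk ↦ apply_eq_apply_of_periodic_sum hinj
    (fun j hj ↦ ne_zero_of_coe_le_degree (hdeg' hj).ge) hc hP hk, ?_⟩
  rw [eq_sum_C_mul_of_periodic hc hP t₀, hdeg₀]

end QuasiPeriodic

section Dilation

/-- The dilation operator `f ↦ f (r * ·)` on functions of a real variable. -/
def dilation (r : ℝ) : Module.End ℂ (ℝ → ℂ) :=
  LinearMap.funLeft ℂ ℂ (r * ·)

lemma dilation_pow_apply (r : ℝ) (n : ℕ) (f : ℝ → ℂ) (t : ℝ) :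
    (dilation r ^ n) f t = f (r ^ n * t) := by
  induction n generalizing t with
  | zero => simp
  | succ n ih =>
    rw [pow_succ', Module.End.mul_apply, dilation, LinearMap.funLeft_apply, ← dilation, ih,
      pow_succ, mul_assoc]

lemma aeval_dilation (r : ℝ) (Q : ℂ[X]) (f : ℝ → ℂ) :
    aeval (dilation r) Q f =
      fun t ↦ ∑ i ∈ Finset.range (Q.natDegree + 1), Q.coeff i * f (r ^ i * t) := by
  ext t
  simp [aeval_eq_sum_range, dilation_pow_apply]

lemma iteratedDeriv_aeval_dilation {f : ℝ → ℂ} {n : ℕ} (hf : ContDiff ℝ n f) (r : ℝ) (Q : ℂ[X]) :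
    iteratedDeriv n (aeval (dilation r) Q f) 0 = Q.eval ((r : ℂ) ^ n) * iteratedDeriv n f 0 := by
  have hdil (i : ℕ) : ContDiff ℝ n fun t ↦ f (r ^ i * t) := by fun_prop
  rw [aeval_dilation, iteratedDeriv_fun_sum fun i _ ↦ (contDiff_const.mul (hdil i)).contDiffAt,
    eval_eq_sum_range, Finset.sum_mul]
  refine Finset.sum_congr rfl fun i _ ↦ ?_
  rw [iteratedDeriv_const_mul _ (hdil i).contDiffAt, iteratedDeriv_comp_const_smul hf]
  simp only [mul_zero, Complex.real_smul]
  push_cast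
  ring

lemma exists_polynomial_of_iteratedDeriv_eventually_eq_zero {f : ℝ → ℂ}
    (hf : AnalyticOnNhd ℝ f Set.univ) (hzero : ∀ᶠ n in atTop, iteratedDeriv n f 0 = 0) :
    ∃ P : ℂ[X], ∀ t : ℝ, f t = P.eval (t : ℂ) := by
  obtain ⟨K, hK⟩ := eventually_atTop.1 hzero
  let P : ℂ[X] := ∑ n ∈ Finset.range K, C ((n.factorial : ℂ)⁻¹ * iteratedDeriv n f 0) * X ^ n
  have hP : AnalyticOnNhd ℝ (fun t : ℝ ↦ P.eval (t : ℂ)) Set.univ := fun t _ ↦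
    (Complex.ofRealCLM.analyticAt t).aeval_polynomial P
  refine ⟨P, congrFun (hf.eq_of_eventuallyEq hP (z₀ := 0) ?_)⟩
  obtain ⟨S, ε, hS⟩ := hf 0 trivial
  filter_upwards [Metric.eball_mem_nhds 0 hS.r_pos] with t ht
  have htaylor := hS.hasSum_iteratedFDeriv ht
  rw [zero_add] at htaylor
  rw [htaylor.unique (hasSum_sum_of_ne_finset_zero (s := Finset.range K) fun n hn ↦ ?_)]
  · simp only [P, eval_finsetSum, eval_mul, eval_C, eval_pow, eval_X,
      iteratedFDeriv_apply_eq_iteratedDeriv_mul_prod]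
    refine Finset.sum_congr rfl fun n _ ↦ ?_
    simp only [Finset.prod_const, Finset.card_univ, Fintype.card_fin, Complex.real_smul,
      Complex.ofReal_pow, Complex.ofReal_inv, Complex.ofReal_natCast]
    ring
  · simp [iteratedFDeriv_apply_eq_iteratedDeriv_mul_prod, hK n (by simpa using hn)]

lemma exists_polynomial_of_aeval_dilation_eventuallyEq_zero {f : ℝ → ℂ}
    (hf : AnalyticOnNhd ℝ f Set.univ) {r : ℝ} (hr : Function.Injective fun n : ℕ ↦ r ^ n)
    {Q : ℂ[X]} (hQ : Q ≠ 0) (h : aeval (dilation r) Q f =ᶠ[𝓝 0] 0) :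
    ∃ P : ℂ[X], ∀ t : ℝ, f t = P.eval (t : ℂ) := by
  have hr' : Function.Injective fun n : ℕ ↦ (r : ℂ) ^ n := by
    simpa [Function.comp_def] using Complex.ofReal_injective.comp hr
  refine exists_polynomial_of_iteratedDeriv_eventually_eq_zero hf ?_
  filter_upwards [eventually_eval_pow_ne_zero hQ hr'] with n hn
  have heigen := iteratedDeriv_aeval_dilation (n := n) hf.contDiff r Q
  rw [h.iteratedDeriv_eq n, Pi.zero_def, iteratedDeriv_fun_const_zero, eq_comm] at heigen
  exact (mul_eq_zero.1 heigen).resolve_left hn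

end Dilation

section ShiftSpace

variable {φ : ℝ → ℂ}

lemma finite_setOf_shift_ne_zero (hφ : HasCompactSupport φ) {K : Set ℝ} (hK : IsCompact K) :
    {ℓ : ℤ | ∃ t ∈ K, φ (t - ℓ) ≠ 0}.Finite := by
  have hdiff : IsCompact ((fun x : ℝ × ℝ ↦ x.1 - x.2) '' K ×ˢ tsupport φ) :=
    (hK.prod hφ).image continuous_sub
  refine (Int.isClosedEmbedding_coe_real.isCompact_preimage hdiff).finite_of_discrete.subset ?_
  rintro ℓ ⟨t, ht, hne⟩
  exact ⟨(t, t - ℓ), ⟨ht, subset_tsupport φ hne⟩, sub_sub_cancel t ℓ⟩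

lemma summable_mul_shift (hφ : HasCompactSupport φ) (a : ℤ → ℂ) (t : ℝ) :
    Summable fun ℓ : ℤ ↦ a ℓ * φ (t - ℓ) :=
  summable_of_hasFiniteSupport <| (finite_setOf_shift_ne_zero hφ isCompact_singleton).subset
    fun _ hℓ ↦ ⟨t, rfl, right_ne_zero_of_mul hℓ⟩

lemma summable_mul_comp_sub_mul (hφ : HasCompactSupport φ) {s : ℤ} (hs : s ≠ 0) (a : ℤ → ℂ)
    (t : ℝ) : Summable fun ℓ : ℤ ↦ a ℓ * φ (t - s * ℓ) := by
  have hinj : Function.Injective (s * · : ℤ → ℤ) := mul_right_injective₀ hs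
  simpa [Function.comp_def, hinj.extend_apply] using
    (summable_mul_shift hφ (Function.extend (s * ·) a 0) t).comp_injective hinj

/-- The synthesis operator `a ↦ ∑ ℓ, a ℓ * φ (· - ℓ)` of a compactly supported function `φ`. -/
noncomputable def shiftSeries (hφ : HasCompactSupport φ) : (ℤ → ℂ) →ₗ[ℂ] (ℝ → ℂ) where
  toFun a t := ∑' ℓ : ℤ, a ℓ * φ (t - ℓ)
  map_add' a b := by
    ext t
    simp only [Pi.add_apply, add_mul]
    exact (summable_mul_shift hφ a t).tsum_add (summable_mul_shift hφ b t)
  map_smul' w a := by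
    ext t
    simp only [Pi.smul_apply, smul_eq_mul, mul_assoc, RingHom.id_apply, tsum_mul_left]

lemma shiftSeries_apply (hφ : HasCompactSupport φ) (a : ℤ → ℂ) (t : ℝ) :
    shiftSeries hφ a t = ∑' ℓ : ℤ, a ℓ * φ (t - ℓ) :=
  rfl

/-- The shift-invariant space `V_φ` generated by the integer shifts of `φ`, with arbitrary
coefficient sequences. -/
noncomputable def shiftSpace (hφ : HasCompactSupport φ) : Submodule ℂ (ℝ → ℂ) :=
  LinearMap.range (shiftSeries hφ)

lemma finiteDimensional_map_restrict_shiftSpace (hφ : HasCompactSupport φ) {K : Set ℝ}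
    (hK : IsCompact K) :
    FiniteDimensional ℂ ((shiftSpace hφ).map (LinearMap.funLeft ℂ ℂ ((↑) : K → ℝ))) := by
  let u (ℓ : ℤ) (t : K) : ℂ := φ (t - ℓ)
  have hfin := finite_setOf_shift_ne_zero hφ hK
  have := FiniteDimensional.span_of_finite ℂ (hfin.image u)
  refine Submodule.finiteDimensional_of_le
    (S₂ := Submodule.span ℂ (u '' {ℓ | ∃ t ∈ K, φ (t - ℓ) ≠ 0})) ?_
  rintro _ ⟨_, ⟨a, rfl⟩, rfl⟩
  have hsum : LinearMap.funLeft ℂ ℂ ((↑) : K → ℝ) (shiftSeries hφ a) =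
      ∑ ℓ ∈ hfin.toFinset, a ℓ • u ℓ := by
    ext t
    rw [LinearMap.funLeft_apply, shiftSeries_apply, tsum_eq_sum (s := hfin.toFinset)]
    · simp [u]
    · intro ℓ hℓ
      by_contra hne
      exact hℓ (hfin.mem_toFinset.2 ⟨t, t.2, right_ne_zero_of_mul hne⟩)
  rw [hsum]
  exact Submodule.sum_smul_mem _ a fun ℓ hℓ ↦
    Submodule.subset_span ⟨ℓ, hfin.mem_toFinset.1 hℓ, rfl⟩

lemma comp_sub_intCast_mem_shiftSpace (hφ : HasCompactSupport φ) {f : ℝ → ℂ}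
    (hf : f ∈ shiftSpace hφ) (m : ℤ) : (fun t ↦ f (t - m)) ∈ shiftSpace hφ := by
  obtain ⟨a, rfl⟩ := hf
  refine ⟨fun ℓ ↦ a (ℓ - m), funext fun t ↦ ?_⟩
  simp only [shiftSeries_apply]
  rw [← (Equiv.addRight m).tsum_eq]
  simp [sub_sub, add_comm]

lemma tsum_mul_comp_sub_mul_mem_shiftSpace (hφ : HasCompactSupport φ) {s : ℤ} (hs : s ≠ 0)
    (a : ℤ → ℂ) : (fun t ↦ ∑' ℓ : ℤ, a ℓ * φ (t - s * ℓ)) ∈ shiftSpace hφ := by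
  have hinj : Function.Injective (s * · : ℤ → ℤ) := mul_right_injective₀ hs
  refine ⟨Function.extend (s * ·) a 0, funext fun t ↦ ?_⟩
  rw [shiftSeries_apply, ← hinj.tsum_eq]
  · simp [hinj.extend_apply]
  · intro n hn
    by_contra hrange
    exact left_ne_zero_of_mul hn (Function.extend_apply' _ _ _ hrange)

/-- `φ` satisfies a finite refinement (two-scale) equation `φ t = ∑ m, c m * φ (s * t - m)` with
integer dilation factor `s`. -/
def IsRefinable (s : ℤ) (φ : ℝ → ℂ) : Prop :=
  ∃ c : ℤ →₀ ℂ, ∀ t, φ t = c.sum fun m w ↦ w * φ (s * t - m)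

lemma IsRefinable.dilation_mem_shiftSpace {s : ℤ} (href : IsRefinable s φ) (hs : s ≠ 0)
    (hφ : HasCompactSupport φ) {f : ℝ → ℂ} (hf : f ∈ shiftSpace hφ) :
    dilation (s : ℝ)⁻¹ f ∈ shiftSpace hφ := by
  obtain ⟨c, hc⟩ := href
  obtain ⟨a, rfl⟩ := hf
  have hmem (m : ℤ) := comp_sub_intCast_mem_shiftSpace hφ
    (tsum_mul_comp_sub_mul_mem_shiftSpace hφ hs a) m
  have hs' : (s : ℝ) ≠ 0 := Int.cast_ne_zero.2 hs
  have hterm (t : ℝ) (ℓ : ℤ) : a ℓ * φ ((s : ℝ)⁻¹ * t - ℓ) =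
      ∑ m ∈ c.support, c m * (a ℓ * φ (t - m - s * ℓ)) := by
    rw [hc, Finsupp.sum, Finset.mul_sum]
    refine Finset.sum_congr rfl fun m _ ↦ ?_
    rw [mul_left_comm, mul_sub, mul_inv_cancel_left₀ hs', sub_right_comm]
  have heq : dilation (s : ℝ)⁻¹ (shiftSeries hφ a) =
      ∑ m ∈ c.support, c m • fun t : ℝ ↦ ∑' ℓ : ℤ, a ℓ * φ (t - m - s * ℓ) := by
    ext t
    simp only [dilation, LinearMap.funLeft_apply, shiftSeries_apply, hterm, Finset.sum_apply,
      Pi.smul_apply, smul_eq_mul, ← tsum_mul_left]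
    exact Summable.tsum_finsetSum fun m _ ↦
      (summable_mul_comp_sub_mul hφ hs a (t - m)).mul_left (c m)
  rw [heq]
  exact Submodule.sum_smul_mem _ c fun m _ ↦ hmem m

lemma exists_ne_zero_aeval_apply_mem_ker {K M M' : Type*} [Field K] [AddCommGroup M] [Module K M]
    [AddCommGroup M'] [Module K M'] {T : Module.End K M} {V : Submodule K M} (hV : V ≤ V.comap T)
    {L : M →ₗ[K] M'} [FiniteDimensional K (V.map L)] {v : M} (hv : v ∈ V) :
    ∃ Q : K[X], Q ≠ 0 ∧ L (aeval T Q v) = 0 := by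
  have hmem (Q : K[X]) : aeval T Q v ∈ V := aeval_apply_smul_mem_of_le_comap hv Q T hV
  let Ψ : K[X] →ₗ[K] V.map L :=
    (L.comp (LinearMap.applyₗ v ∘ₗ (aeval T).toLinearMap)).codRestrict (V.map L)
      fun Q ↦ Submodule.mem_map_of_mem (hmem Q)
  have hΨ : ¬ Function.Injective Ψ := fun hinj ↦
    Polynomial.not_finite (Module.Finite.of_injective Ψ hinj)
  rw [injective_iff_map_eq_zero] at hΨ
  push Not at hΨ
  obtain ⟨Q, hQ, hQ0⟩ := hΨ
  exact ⟨Q, hQ0, congrArg Subtype.val hQ⟩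

lemma IsRefinable.exists_polynomial_of_mem_shiftSpace {s : ℤ} (href : IsRefinable s φ)
    (hs : 1 < |s|) (hφ : HasCompactSupport φ) {f : ℝ → ℂ} (hf : f ∈ shiftSpace hφ)
    (han : AnalyticOnNhd ℝ f Set.univ) : ∃ P : ℂ[X], ∀ t : ℝ, f t = P.eval (t : ℂ) := by
  have hs0 : s ≠ 0 := by rintro rfl; simp at hs
  have hs' : 1 < s.natAbs := by rwa [Int.abs_eq_natAbs, Nat.one_lt_cast] at hs
  have hpow : Function.Injective fun n : ℕ ↦ (s : ℝ)⁻¹ ^ n := by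
    simpa [Function.comp_def] using inv_injective.comp
      (Int.cast_injective (α := ℝ) |>.comp (Int.pow_right_injective hs'))
  have := finiteDimensional_map_restrict_shiftSpace hφ (isCompact_closedBall (0 : ℝ) 1)
  obtain ⟨Q, hQ, hQf⟩ := exists_ne_zero_aeval_apply_mem_ker
    (fun _ ↦ href.dilation_mem_shiftSpace hs0 hφ)
    (L := LinearMap.funLeft ℂ ℂ ((↑) : Metric.closedBall (0 : ℝ) 1 → ℝ)) hf
  refine exists_polynomial_of_aeval_dilation_eventuallyEq_zero han hpow hQ ?_
  filter_upwards [Metric.closedBall_mem_nhds (0 : ℝ) one_pos] with t ht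
  exact congrFun hQf ⟨t, ht⟩

end ShiftSpace

section Fourier

lemma eq_mul_of_tendsto_prod {K : Type*} [Field K] [TopologicalSpace K] [T2Space K]
    [ContinuousMul K] {F G : K → K} {s : K} (hs : s ≠ 0)
    (h : ∀ z, Tendsto (fun J : ℕ ↦ ∏ j ∈ Finset.Icc 1 J, F (s ^ (-(j : ℤ)) * z)) atTop (𝓝 (G z)))
    (z : K) : G z = F (z / s) * G (z / s) := by
  refine tendsto_nhds_unique ((h z).comp (tendsto_add_atTop_nat 1))
    (((h (z / s)).const_mul (F (z / s))).congr fun J ↦ ?_)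
  have hfac (j : ℕ) : s ^ (-(j : ℤ)) * (z / s) = s ^ (-((j + 1 : ℕ) : ℤ)) * z := by
    rw [Nat.cast_succ, neg_add, zpow_add₀ hs, zpow_neg_one, mul_assoc, div_eq_inv_mul]
  have hIcc (J : ℕ) (f : ℕ → K) : ∏ j ∈ Finset.Icc 1 J, f j = ∏ j ∈ Finset.range J, f (j + 1) := by
    rw [← Finset.Ico_add_one_right_eq_Icc, Finset.range_eq_Ico, Finset.prod_Ico_add']
  simp only [Function.comp_apply, hIcc, hfac, Finset.prod_range_succ' _ J]
  rw [mul_comm, zero_add, Nat.cast_one, zpow_neg_one, div_eq_inv_mul]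

lemma mul_exp_eq_fourierChar_smul (x w : ℝ) (z : ℂ) :
    z * Complex.exp (-(2 * Real.pi * Complex.I * x * w)) =
      Real.fourierChar (-inner ℝ x w) • z := by
  rw [Circle.smul_def, Real.fourierChar_apply, smul_eq_mul, mul_comm z, RCLike.inner_apply]
  simp only [conj_trivial]
  push_cast
  ring_nf

lemma fourierExt_ofReal (φ : ℝ → ℂ) (w : ℝ) : fourierExt φ w = FourierTransform.fourier φ w := by
  simp only [fourierExt, Real.fourier_eq, mul_exp_eq_fourierChar_smul]

lemma fourierExt_comp_mul_sub (φ : ℝ → ℂ) {s : ℝ} (hs : s ≠ 0) (τ : ℝ) (z : ℂ) :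
    fourierExt (fun t ↦ φ (s * t - τ)) z =
      |s|⁻¹ * Complex.exp (-(2 * Real.pi * Complex.I * τ * (z / s))) * fourierExt φ (z / s) := by
  let G (x : ℝ) : ℂ := φ (x - τ) * Complex.exp (-(2 * Real.pi * Complex.I * x * (z / s)))
  have hs' : (s : ℂ) ≠ 0 := Complex.ofReal_ne_zero.2 hs
  calc fourierExt (fun t ↦ φ (s * t - τ)) z
    _ = ∫ x, G (s * x) := by
      refine integral_congr_ae (.of_forall fun x ↦ ?_)
      simp only [G]
      push_cast
      field_simp
    _ = |s|⁻¹ * ∫ x, G (x + τ) := by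
      rw [Measure.integral_comp_mul_left, integral_add_right_eq_self, abs_inv, Complex.real_smul]
    _ = _ := by
      rw [mul_assoc, fourierExt, ← integral_const_mul (Complex.exp _)]
      congr 1
      refine integral_congr_ae (.of_forall fun x ↦ ?_)
      simp only [G, add_sub_cancel_right]
      rw [mul_left_comm, ← Complex.exp_add]
      push_cast
      ring_nf

lemma integrable_mul_exp {f : ℝ → ℂ} (hf : Integrable f) (w : ℝ) :
    Integrable fun x : ℝ ↦ f x * Complex.exp (-(2 * Real.pi * Complex.I * x * w)) := by
  simp only [mul_exp_eq_fourierChar_smul]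
  exact (Real.fourierIntegral_convergent_iff w).2 hf

lemma fourierExt_sub {f g : ℝ → ℂ} (hf : Integrable f) (hg : Integrable g) (w : ℝ) :
    fourierExt (f - g) w = fourierExt f w - fourierExt g w := by
  simp only [fourierExt, Pi.sub_apply, sub_mul]
  exact integral_sub (integrable_mul_exp hf w) (integrable_mul_exp hg w)

lemma fourierExt_sum_const_mul {ι : Type*} {S : Finset ι} {f : ι → ℝ → ℂ}
    (hf : ∀ i ∈ S, Integrable (f i)) (c : ι → ℂ) (w : ℝ) :
    fourierExt (fun t ↦ ∑ i ∈ S, c i * f i t) w = ∑ i ∈ S, c i * fourierExt (f i) w := by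
  simp only [fourierExt, Finset.sum_mul, mul_assoc, ← integral_const_mul]
  refine integral_finsetSum S fun i hi ↦ ?_
  simpa only [mul_assoc] using (integrable_mul_exp (hf i hi) w).const_mul (c i)

lemma eq_of_fourierExt_eq {f g : ℝ → ℂ} (hfc : Continuous f) (hfi : Integrable f)
    (hgc : Continuous g) (hgi : Integrable g) (h : ∀ w : ℝ, fourierExt f w = fourierExt g w) :
    f = g := by
  have hzero : FourierTransform.fourier (f - g) = 0 := funext fun w ↦ by
    rw [← fourierExt_ofReal, fourierExt_sub hfi hgi, h, sub_self, Pi.zero_apply]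
  rw [← sub_eq_zero, ← (hfc.sub hgc).fourierInv_fourier_eq (hfi.sub hgi) (by simp [hzero]), hzero]
  ext w
  simp [Real.fourierInv_eq]

lemma refinement_of_fourierExt {φ : ℝ → ℂ} (hφc : Continuous φ) (hφi : Integrable φ) {s : ℝ}
    (hs : s ≠ 0) {ι : Type*} {S : Finset ι} {c : ι → ℂ} {τ : ι → ℝ}
    (h : ∀ w : ℝ, fourierExt φ w =
      (∑ i ∈ S, c i * Complex.exp (-(2 * Real.pi * Complex.I * τ i * (w / s)))) *
        fourierExt φ (w / s)) (t : ℝ) :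
    φ t = ∑ i ∈ S, |s| * c i * φ (s * t - τ i) := by
  have hint (i : ι) : Integrable fun t ↦ φ (s * t - τ i) :=
    (hφi.comp_sub_right (τ i)).comp_mul_left' hs
  refine congrFun (eq_of_fourierExt_eq hφc hφi (by fun_prop)
    (integrable_finsetSum S fun i _ ↦ (hint i).const_mul _) fun w ↦ ?_) t
  rw [fourierExt_sum_const_mul fun i _ ↦ hint i, h, Finset.sum_mul]
  refine Finset.sum_congr rfl fun i _ ↦ ?_
  have hs' : ((|s| : ℝ) : ℂ) ≠ 0 := Complex.ofReal_ne_zero.2 (abs_ne_zero.2 hs)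
  rw [fourierExt_comp_mul_sub φ hs]
  push_cast
  field_simp

lemma isRefinable_of_tendsto_prod {φ : ℝ → ℂ} (hφc : Continuous φ) (hφi : Integrable φ) {s : ℤ}
    (hs : s ≠ 0) {S : Finset ℕ} {c : ℕ → ℂ} {A : ℂ → ℂ}
    (hA : ∀ y, A y = ∑ m ∈ S, c m * Complex.exp (-(2 * Real.pi * Complex.I * m * y)))
    (hprod : ∀ z : ℂ, Tendsto (fun J : ℕ ↦ ∏ j ∈ Finset.Icc 1 J, A ((s : ℂ) ^ (-(j : ℤ)) * z))
      atTop (𝓝 (fourierExt φ z))) :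
    IsRefinable s φ := by
  have hφ := refinement_of_fourierExt hφc hφi (Int.cast_ne_zero.2 hs) (S := S) (c := c)
    (τ := fun m ↦ (m : ℝ)) fun w ↦ by
      simpa [hA] using eq_mul_of_tendsto_prod (Int.cast_ne_zero.2 hs) hprod w
  refine ⟨∑ m ∈ S, Finsupp.single (m : ℤ) (|(s : ℝ)| * c m), fun t ↦ ?_⟩
  rw [hφ t, ← Finsupp.sum_finsetSum_index (by simp) (by simp [add_mul])]
  refine Finset.sum_congr rfl fun m _ ↦ ?_
  rw [Finsupp.sum_single_index (zero_mul _), Int.cast_natCast]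

end Fourier

lemma analyticOnNhd_exp_mul_sum_eval_mul {ι : Type*} {S : Finset ι} (lam : ℂ) (p : ι → ℂ[X])
    {ω : ι → ℝ → ℂ} (hω : ∀ i ∈ S, ∀ x, AnalyticAt ℝ (ω i) x) :
    AnalyticOnNhd ℝ
      (fun t : ℝ ↦ Complex.exp (lam * t) * ∑ i ∈ S, (p i).eval (t : ℂ) * ω i t) Set.univ := by
  intro x _
  have hcast : AnalyticAt ℝ ((↑) : ℝ → ℂ) x := Complex.ofRealCLM.analyticAt x
  have hexp : AnalyticAt ℝ Complex.exp (lam * x) := analyticAt_cexp.restrictScalars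
  refine (hexp.fun_comp (f := fun t : ℝ ↦ lam * t) (analyticAt_const.mul hcast)).mul ?_
  exact S.analyticAt_fun_sum fun i hi ↦ (hcast.aeval_polynomial (p i)).mul (hω i hi x)

theorem stmt_18_general {s : ℤ} (hs : 1 < |s|) {φ : ℝ → ℂ} (hφ : HasCompactSupport φ)
    (href : IsRefinable s φ) {lam : ℂ} {d : ℕ} {ω : ℕ → ℝ → ℂ}
    (hper : ∀ k ≤ d, ∀ t : ℝ, ω k (t + 1) = ω k t)
    (hana : ∀ k ≤ d, ∀ x : ℝ, AnalyticAt ℝ (ω k) x) (hωd : ∃ t : ℝ, ω d t ≠ 0)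
    {p : ℕ → ℂ[X]} (hdeg : ∀ k ≤ d, (p k).degree = k)
    (hg : (fun t : ℝ ↦ Complex.exp (lam * t) *
      ∑ k ∈ Finset.range (d + 1), (p k).eval (t : ℂ) * ω k t) ∈ shiftSpace hφ) :
    (∃ m : ℤ, lam = 2 * Real.pi * Complex.I * m) ∧
    (∀ k ≤ d, ∃ cst : ℂ, ∀ t : ℝ, Complex.exp (lam * t) * ω k t = cst) ∧
    ∃ P : ℂ[X], P.degree = d ∧ ∀ t : ℝ,
      Complex.exp (lam * t) * ∑ k ∈ Finset.range (d + 1), (p k).eval (t : ℂ) * ω k t =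
        P.eval (t : ℂ) := by
  obtain ⟨P, hgP⟩ := href.exists_polynomial_of_mem_shiftSpace hs hφ hg
    (analyticOnNhd_exp_mul_sum_eval_mul lam p fun k hk ↦ hana k (Finset.mem_range_succ_iff.1 hk))
  let c (k : ℕ) (t : ℝ) : ℂ := Complex.exp (lam * t) * ω k t
  have hc : ∀ k ≤ d, ∀ t, c k (t + 1) = Complex.exp lam * c k t := fun k hk t ↦ by
    simp only [c, hper k hk, Complex.ofReal_add, Complex.ofReal_one, mul_add_one, Complex.exp_add]
    ring
  have hcd : ∃ t, c d t ≠ 0 := hωd.imp fun t ht ↦ mul_ne_zero (Complex.exp_ne_zero _) ht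
  have hcP (t : ℝ) : ∑ k ∈ Finset.range (d + 1), (p k).eval ↑t * c k t = P.eval ↑t := by
    simp only [← hgP, Finset.mul_sum, c, mul_left_comm]
  obtain ⟨hexp, hconst, hPdeg⟩ :=
    eq_one_and_const_and_degree_of_quasiPeriodic_sum hdeg (Complex.exp_ne_zero lam) hc hcd hcP
  obtain ⟨m, hm⟩ := Complex.exp_eq_one_iff.1 hexp
  exact ⟨⟨m, hm.trans (mul_comm _ _)⟩, fun k hk ↦ ⟨c k 0, (hconst k hk · 0)⟩, P, hPdeg, hgP⟩

/-- stationary case: Let `φ̂(z) = Π_{j=1}^∞ a(2^{−j}z)` for one fixed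
trigonometric polynomial `a` of degree ≤ N with `a(0) = 1`, `sup_ℝ|a| ≤ C`, where `φ` is
continuous, integrable, compactly supported with linearly independent integer shifts. If the
analytic function `g(t) = e^{λt} Σ_{k=0}^d p_k(t)·ω_k(t)` (with `d ≤ N`, `ω_k` 1-periodic
analytic, `ω_d ≢ 0`, `deg p_k = k`) belongs to `V_φ`, then `λ ∈ 2πi·ℤ`, each
`t ↦ e^{λt}·ω_k(t)` is constant, and `g` is an algebraic polynomial of degree `d`. -/
theorem stmt_18 (N : ℕ) (C : ℝ) (hC : 0 < C)
    (coef : ℕ → ℂ) (A : ℂ → ℂ)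
    (hA : ∀ y : ℂ, A y =
      ∑ m ∈ Finset.range (N + 1), coef m * Complex.exp (-(2 * (Real.pi : ℂ) * Complex.I * (m : ℂ) * y)))
    (hA0 : A 0 = 1)
    (hAbd : ∀ y : ℝ, ‖A ((y : ℂ))‖ ≤ C)
    (φ : ℝ → ℂ) (hcont : Continuous φ) (hint : Integrable φ) (hsupp : HasCompactSupport φ)
    (hli : ∀ b : ℤ → ℂ, (∀ t : ℝ, ∑' ℓ : ℤ, b ℓ * φ (t - (ℓ : ℝ)) = 0) → ∀ ℓ, b ℓ = 0)
    (hprod : ∀ z : ℂ, Filter.Tendsto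
      (fun J : ℕ => ∏ j ∈ Finset.Icc 1 J, A ((2 : ℂ) ^ (-(j : ℤ)) * z))
      Filter.atTop (nhds (fourierExt φ z)))
    (lam : ℂ) (d : ℕ) (hd : d ≤ N) (ω : ℕ → ℝ → ℂ)
    (hper : ∀ k ≤ d, ∀ t : ℝ, ω k (t + 1) = ω k t)
    (hana : ∀ k ≤ d, ∀ x : ℝ, AnalyticAt ℝ (ω k) x)
    (hωd : ∃ t : ℝ, ω d t ≠ 0)
    (p : ℕ → Polynomial ℂ) (hdeg : ∀ k ≤ d, (p k).degree = k)
    (a : ℤ → ℂ)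
    (hg : ∀ t : ℝ,
      Complex.exp (lam * (t : ℂ)) * ∑ k ∈ Finset.range (d + 1), (p k).eval (t : ℂ) * ω k t
        = ∑' ℓ : ℤ, a ℓ * φ (t - (ℓ : ℝ))) :
    (∃ m : ℤ, lam = 2 * Real.pi * Complex.I * m) ∧
    (∀ k ≤ d, ∃ cst : ℂ, ∀ t : ℝ, Complex.exp (lam * (t : ℂ)) * ω k t = cst) ∧
    ∃ P : Polynomial ℂ, P.degree = d ∧ ∀ t : ℝ,
      Complex.exp (lam * (t : ℂ)) * ∑ k ∈ Finset.range (d + 1), (p k).eval (t : ℂ) * ω k t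
        = P.eval (t : ℂ) := by
  have href : IsRefinable 2 φ := isRefinable_of_tendsto_prod hcont hint two_ne_zero hA
    (by exact_mod_cast hprod)
  exact stmt_18_general (by norm_num) hsupp href hper hana hωd hdeg ⟨a, funext fun t ↦ (hg t).symm⟩
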